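/- In the deterministic system above, the explicit formula holds: Y_h = -λ₊ʰ/(λ₋-λ₊)·[(1-λ₋)Y_0 + μ_0] + λ₋ʰ/(λ₋-λ₊)·[(1-λ₊)Y_0 + μ_0] + g(1+F)(h-1) + H - [g(1+F) - H·0]·(κ/(λ₋-λ₊))·(λ₊ʰ/(1-λ₊) - λ₋ʰ/(1-λ₋)) + H·(κ/(λ₋-λ₊))·(λ₊ʰ/(1-λ₊) - λ₋ʰ/(1-λ₋)) - g(1+F)·(κ/(λ₋-λ₊))·[λ₋(1-λ₋ʰ)/(1-λ₋)² - λ₊(1-λ₊ʰ)/(1-λ₊)²]; i.e., Y_h equals g(1+F)(h-1) + H plus exponentially decaying terms in λ±ʰ plus the constant -g(1+F)·(κ/(λ₋-λ₊))·[λ₋/(1-λ₋)² - λ₊/(1-λ₊)²] up to terms vanishing geometrically. -/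

import Mathlib

/-!
Eliminating `μ` turns the system into a second-order recurrence for `Y` with characteristic roots
`λ₊`, `λ₋` and forcing `κ (H + c t)`, where `c = g (1 + F)` and `κ = (1 - λ₊) (1 - λ₋)`. Subtracting
the affine solution `t ↦ H + c (t - 1 / (1 - λ₊) - 1 / (1 - λ₋))` leaves a homogeneous recurrence,
which factors into two first-order ones: `z (t + 1) - λ₊ z t` is geometric with ratio `λ₋`, and
vice versa. Their difference is `(λ₋ - λ₊) z t`.
-/

section HomogeneousRecurrence

variable {R : Type*} [CommRing R] {a b : R} {z : ℕ → R}

lemma sub_mul_eq_pow_mul_of_homogeneous_rec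
    (hz : ∀ t, z (t + 2) = (a + b) * z (t + 1) - a * b * z t) (t : ℕ) :
    z (t + 1) - a * z t = b ^ t * (z 1 - a * z 0) := by
  induction t with
  | zero => ring
  | succ t ih => linear_combination hz t + b * ih

lemma root_sub_mul_eq_of_homogeneous_rec
    (hz : ∀ t, z (t + 2) = (a + b) * z (t + 1) - a * b * z t) (t : ℕ) :
    (b - a) * z t = b ^ t * (z 1 - a * z 0) - a ^ t * (z 1 - b * z 0) := by
  have hz_swap : ∀ t, z (t + 2) = (b + a) * z (t + 1) - b * a * z t := fun t ↦ by
    rw [hz, add_comm b a, mul_comm b a]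
  linear_combination sub_mul_eq_pow_mul_of_homogeneous_rec hz t -
    sub_mul_eq_pow_mul_of_homogeneous_rec hz_swap t

end HomogeneousRecurrence

section AffineForcing

variable {K : Type*} [Field K] {a b : K}

/-- The affine particular solution of the second-order recurrence with characteristic roots `a`, `b`
and forcing `(1 - a) * (1 - b) * (H + c * t)`. It is meaningful only for `a ≠ 1` and `b ≠ 1`. -/
def affineTrend (a b H c : K) (t : ℕ) : K :=
  H + c * (t - 1 / (1 - a) - 1 / (1 - b))

lemma affineTrend_comm (a b H c : K) : affineTrend a b H c = affineTrend b a H c := by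
  funext t
  unfold affineTrend
  ring

lemma affineTrend_add_two (ha : a ≠ 1) (hb : b ≠ 1) (H c : K) (t : ℕ) :
    affineTrend a b H c (t + 2) = (a + b) * affineTrend a b H c (t + 1)
      - a * b * affineTrend a b H c t + (1 - a) * (1 - b) * (H + c * t) := by
  have ha' : 1 - a ≠ 0 := sub_ne_zero.mpr ha.symm
  have hb' : 1 - b ≠ 0 := sub_ne_zero.mpr hb.symm
  unfold affineTrend
  push_cast
  field_simp
  ring

lemma affineTrend_one_sub_mul_zero (ha : a ≠ 1) (b H c : K) :
    affineTrend a b H c 1 - a * affineTrend a b H c 0 = (1 - a) * (H - c / (1 - b)) := by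
  have ha' : 1 - a ≠ 0 := sub_ne_zero.mpr ha.symm
  have hcancel : (1 - a) * (1 / (1 - a)) = 1 := mul_one_div_cancel ha'
  simp only [affineTrend, Nat.cast_one, Nat.cast_zero]
  linear_combination -c * hcancel

lemma eq_affineTrend_add_of_affine_rec (hab : a ≠ b) (ha : a ≠ 1) (hb : b ≠ 1) {H c : K}
    {y : ℕ → K}
    (hy : ∀ t : ℕ, y (t + 2) =
      (a + b) * y (t + 1) - a * b * y t + (1 - a) * (1 - b) * (H + c * t)) (t : ℕ) :
    y t = affineTrend a b H c t +
      (b ^ t * (y 1 - a * y 0 - (1 - a) * (H - c / (1 - b)))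
        - a ^ t * (y 1 - b * y 0 - (1 - b) * (H - c / (1 - a)))) / (b - a) := by
  have hdeviation := root_sub_mul_eq_of_homogeneous_rec (a := a) (b := b)
    (z := fun t ↦ y t - affineTrend a b H c t)
    (fun t ↦ by linear_combination hy t - affineTrend_add_two ha hb H c t) t
  have htrend_a := affineTrend_one_sub_mul_zero ha b H c
  have htrend_b := affineTrend_one_sub_mul_zero hb a H c
  rw [affineTrend_comm b a] at htrend_b
  rw [← sub_eq_iff_eq_add', eq_div_iff (sub_ne_zero.mpr hab.symm)]
  linear_combination hdeviation - b ^ t * htrend_a + a ^ t * htrend_b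

end AffineForcing

lemma second_order_rec_of_system {R : Type*} [CommRing R] {κ γ : R} {Y μ f : ℕ → R}
    (hY : ∀ t, Y (t + 1) = Y t + μ t)
    (hμ : ∀ t, μ (t + 1) = -κ * Y t + γ * μ t + κ * f t) (t : ℕ) :
    Y (t + 2) = (1 + γ) * Y (t + 1) - (γ + κ) * Y t + κ * f t := by
  linear_combination hY (t + 1) + hμ t - γ * hY t

lemma one_sub_mul_one_sub_of_vieta {R : Type*} [CommRing R] {κ γ lamp lamm : R}
    (hsum : lamp + lamm = 1 + γ) (hprod : lamp * lamm = γ + κ) :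
    (1 - lamp) * (1 - lamm) = κ := by
  linear_combination hprod - hsum

lemma vieta_of_eq_half_add_sub_sqrt {κ γ lamp lamm : ℝ} (hκ : κ < (1 - γ) ^ 2 / 4)
    (hp : lamp = (γ + 1) / 2 + (1 / 2) * Real.sqrt ((1 - γ) ^ 2 - 4 * κ))
    (hm : lamm = (γ + 1) / 2 - (1 / 2) * Real.sqrt ((1 - γ) ^ 2 - 4 * κ)) :
    lamp + lamm = 1 + γ ∧ lamp * lamm = γ + κ ∧ lamp ≠ lamm := by
  have hdiscrim : 0 < (1 - γ) ^ 2 - 4 * κ := by linarith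
  have hsqrt_pos := Real.sqrt_pos.mpr hdiscrim
  have hsqrt_sq := Real.sq_sqrt hdiscrim.le
  refine ⟨by rw [hp, hm]; ring, ?_, ne_of_gt (by linarith)⟩
  rw [hp, hm]
  linear_combination -(1 / 4) * hsqrt_sq

theorem stmt_6_general {K : Type*} [Field K] {κ γ g F H lamp lamm : K} (hκ : κ ≠ 0)
    (hsum : lamp + lamm = 1 + γ) (hprod : lamp * lamm = γ + κ) (hne : lamp ≠ lamm)
    {Y μ ξ : ℕ → K} (hξ0 : ξ 0 = 0)
    (hY : ∀ t : ℕ, Y (t + 1) = Y t + μ t + ξ t)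
    (hμ : ∀ t : ℕ, μ (t + 1) = -κ * Y t + γ * μ t + κ * (H + g * (1 + F) * t))
    (hξ : ∀ t : ℕ, ξ (t + 1) = ξ t) :
    ∀ h : ℕ, Y h =
      -(lamp ^ h / (lamm - lamp)) * ((1 - lamm) * Y 0 + μ 0)
      + (lamm ^ h / (lamm - lamp)) * ((1 - lamp) * Y 0 + μ 0)
      + g * (1 + F) * ((h : K) - 1) + H
      - g * (1 + F) * (κ / (lamm - lamp)) *
          (lamp ^ h / (1 - lamp) - lamm ^ h / (1 - lamm))
      + H * (κ / (lamm - lamp)) *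
          (lamp ^ h / (1 - lamp) - lamm ^ h / (1 - lamm))
      - g * (1 + F) * (κ / (lamm - lamp)) *
          (lamm * (1 - lamm ^ h) / (1 - lamm)^2
            - lamp * (1 - lamp ^ h) / (1 - lamp)^2) := by
  intro h
  have hξ_zero : ∀ t, ξ t = 0 := Nat.rec hξ0 fun t ih ↦ (hξ t).trans ih
  have hY' : ∀ t, Y (t + 1) = Y t + μ t := fun t ↦ by rw [hY, hξ_zero, add_zero]
  have hκ_eq := one_sub_mul_one_sub_of_vieta hsum hprod
  obtain ⟨hp_sub, hm_sub⟩ : 1 - lamp ≠ 0 ∧ 1 - lamm ≠ 0 := mul_ne_zero_iff.mp (hκ_eq ▸ hκ)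
  have hrec : ∀ t : ℕ, Y (t + 2) = (lamp + lamm) * Y (t + 1) - lamp * lamm * Y t
      + (1 - lamp) * (1 - lamm) * (H + g * (1 + F) * t) := fun t ↦ by
    rw [second_order_rec_of_system hY' hμ, hsum, hprod, hκ_eq]
  have hd : lamm - lamp ≠ 0 := sub_ne_zero.mpr hne.symm
  rw [eq_affineTrend_add_of_affine_rec hne (sub_ne_zero.mp hp_sub).symm
    (sub_ne_zero.mp hm_sub).symm hrec h, hY' 0, ← hκ_eq, affineTrend]
  field_simp
  ring

/-- Explicit formula for Y_h in the deterministic system. -/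
theorem stmt_6 (κ γ g F H : ℝ) (hγ0 : 0 < γ) (hγ1 : γ < 1) (hκ0 : 0 < κ)
    (hκ : κ < (1 - γ)^2 / 4)
    (lamp lamm : ℝ)
    (hp : lamp = (γ + 1)/2 + (1/2) * Real.sqrt ((1 - γ)^2 - 4*κ))
    (hm : lamm = (γ + 1)/2 - (1/2) * Real.sqrt ((1 - γ)^2 - 4*κ))
    (Y μ ξ : ℕ → ℝ) (hξ0 : ξ 0 = 0)
    (hY : ∀ t : ℕ, Y (t + 1) = Y t + μ t + ξ t)
    (hμ : ∀ t : ℕ, μ (t + 1) = -κ * Y t + γ * μ t + κ * (H + g * (1 + F) * t))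
    (hξ : ∀ t : ℕ, ξ (t + 1) = ξ t) :
    ∀ h : ℕ, Y h =
      -(lamp ^ h / (lamm - lamp)) * ((1 - lamm) * Y 0 + μ 0)
      + (lamm ^ h / (lamm - lamp)) * ((1 - lamp) * Y 0 + μ 0)
      + g * (1 + F) * ((h : ℝ) - 1) + H
      - g * (1 + F) * (κ / (lamm - lamp)) *
          (lamp ^ h / (1 - lamp) - lamm ^ h / (1 - lamm))
      + H * (κ / (lamm - lamp)) *
          (lamp ^ h / (1 - lamp) - lamm ^ h / (1 - lamm))
      - g * (1 + F) * (κ / (lamm - lamp)) *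
          (lamm * (1 - lamm ^ h) / (1 - lamm)^2
            - lamp * (1 - lamp ^ h) / (1 - lamp)^2) := by
  obtain ⟨hsum, hprod, hne⟩ := vieta_of_eq_half_add_sub_sqrt hκ hp hm
  exact stmt_6_general hκ0.ne' hsum hprod hne hξ0 hY hμ hξ
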